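/- Consider the zipper DAG: two disjoint groups A = {a_1,…,a_d} and B = {b_1,…,b_d} of source nodes, and a chain c_1, …, c_ℓ where c_1 has in-edges from all of A, and for i ≥ 2, node c_i has in-edges from c_{i−1} and from all of A if i is odd and all of B if i is even. For d ≥ 3, r = d + 2, and ℓ sufficiently large, the optimal one-shot RBP cost is at least d·(ℓ − O(1)) − O(d) while there is a PRBP strategy of cost at most 2ℓ + O(d); in particular OPT_PRBP < OPT_RBP. -/

import Mathlib

open scoped Classical

/-! ### Directed graphs / DAGs -/

structure DirGraph (V : Type) where
  E : V → V → Prop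

namespace DirGraph

variable {V : Type}

def Acyclic (G : DirGraph V) : Prop := ∀ v, ¬ Relation.TransGen G.E v v

def IsSource (G : DirGraph V) (v : V) : Prop := ∀ u, ¬ G.E u v

def IsSink (G : DirGraph V) (v : V) : Prop := ∀ u, ¬ G.E v u

def NoIsolated (G : DirGraph V) : Prop := ∀ v, (∃ u, G.E u v) ∨ (∃ u, G.E v u)

noncomputable def inDeg (G : DirGraph V) (v : V) : ℕ := {u | G.E u v}.ncard

noncomputable def outDeg (G : DirGraph V) (v : V) : ℕ := {u | G.E v u}.ncard

noncomputable def maxInDeg (G : DirGraph V) [Fintype V] : ℕ :=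
  Finset.univ.sup G.inDeg

noncomputable def maxOutDeg (G : DirGraph V) [Fintype V] : ℕ :=
  Finset.univ.sup G.outDeg

end DirGraph

/-! ### The (one-shot) red-blue pebble game (RBP) -/

structure RBPState (V : Type) where
  red : Finset V
  blue : Finset V
  computed : Finset V

inductive RBPMove (V : Type) where
  | save : V → RBPMove V
  | load : V → RBPMove V
  | compute : V → RBPMove V
  | delete : V → RBPMove V

def RBPMove.ioCost {V : Type} : RBPMove V → ℕ
  | .save _ => 1
  | .load _ => 1
  | _ => 0

variable {V : Type} [Fintype V] [DecidableEq V]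

def RBPStep (G : DirGraph V) (r : ℕ) (s : RBPState V) :
    RBPMove V → RBPState V → Prop
  | .save v, t => v ∈ s.red ∧ t = { s with blue := insert v s.blue }
  | .load v, t => v ∈ s.blue ∧ (insert v s.red).card ≤ r ∧
      t = { s with red := insert v s.red }
  | .compute v, t => ¬ G.IsSource v ∧ v ∉ s.computed ∧
      (∀ u, G.E u v → u ∈ s.red) ∧ (insert v s.red).card ≤ r ∧
      t = { s with red := insert v s.red, computed := insert v s.computed }
  | .delete v, t => v ∈ s.red ∧ t = { s with red := s.red.erase v }

inductive RBPReaches (G : DirGraph V) (r : ℕ) :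
    RBPState V → List (RBPMove V) → RBPState V → Prop
  | nil (s : RBPState V) : RBPReaches G r s [] s
  | cons {s t u : RBPState V} {m : RBPMove V} {L : List (RBPMove V)} :
      RBPStep G r s m t → RBPReaches G r t L u → RBPReaches G r s (m :: L) u

noncomputable def RBPInit (G : DirGraph V) : RBPState V :=
  ⟨∅, Finset.univ.filter (fun v => G.IsSource v), ∅⟩

def RBPValid (G : DirGraph V) (r : ℕ) (L : List (RBPMove V)) : Prop :=
  ∃ t, RBPReaches G r (RBPInit G) L t ∧ ∀ v, G.IsSink v → v ∈ t.blue

def RBPCost {V : Type} (L : List (RBPMove V)) : ℕ := (L.map RBPMove.ioCost).sum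

noncomputable def optRBP (G : DirGraph V) (r : ℕ) : ℕ∞ :=
  sInf ((fun L => (RBPCost L : ℕ∞)) '' {L | RBPValid G r L})

/-! ### The partial-computing red-blue pebble game (PRBP) -/

structure PRBPState (V : Type) where
  lred : Finset V
  dred : Finset V
  blue : Finset V
  marked : Finset (V × V)

def PRBPState.red (s : PRBPState V) : Finset V := s.lred ∪ s.dred

inductive PRBPMove (V : Type) where
  | save : V → PRBPMove V
  | load : V → PRBPMove V
  | pcompute : V → V → PRBPMove V
  | delete : V → PRBPMove V

def PRBPMove.ioCost {V : Type} : PRBPMove V → ℕ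
  | .save _ => 1
  | .load _ => 1
  | _ => 0

def PRBPStep (G : DirGraph V) (r : ℕ) (s : PRBPState V) :
    PRBPMove V → PRBPState V → Prop
  | .save v, t => v ∈ s.dred ∧
      t = { s with lred := insert v s.lred, dred := s.dred.erase v,
                   blue := insert v s.blue }
  | .load v, t => v ∈ s.blue ∧ ((insert v s.lred) ∪ s.dred).card ≤ r ∧
      t = { s with lred := insert v s.lred }
  | .pcompute u v, t => G.E u v ∧ (u, v) ∉ s.marked ∧
      (∀ w, G.E w u → (w, u) ∈ s.marked) ∧ u ∈ s.red ∧
      (v ∈ s.red ∨ (v ∉ s.red ∧ v ∉ s.blue)) ∧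
      ((s.lred.erase v) ∪ (insert v s.dred)).card ≤ r ∧
      t = { s with lred := s.lred.erase v, dred := insert v s.dred,
                   blue := s.blue.erase v, marked := insert (u, v) s.marked }
  | .delete v, t =>
      (v ∈ s.lred ∧ t = { s with lred := s.lred.erase v }) ∨
      (v ∈ s.dred ∧ (∀ w, G.E v w → (v, w) ∈ s.marked) ∧
        t = { s with dred := s.dred.erase v })

inductive PRBPReaches (G : DirGraph V) (r : ℕ) :
    PRBPState V → List (PRBPMove V) → PRBPState V → Prop
  | nil (s : PRBPState V) : PRBPReaches G r s [] s
  | cons {s t u : PRBPState V} {m : PRBPMove V} {L : List (PRBPMove V)} :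
      PRBPStep G r s m t → PRBPReaches G r t L u → PRBPReaches G r s (m :: L) u

noncomputable def PRBPInit (G : DirGraph V) : PRBPState V :=
  ⟨∅, ∅, Finset.univ.filter (fun v => G.IsSource v), ∅⟩

def PRBPValid (G : DirGraph V) (r : ℕ) (L : List (PRBPMove V)) : Prop :=
  ∃ t, PRBPReaches G r (PRBPInit G) L t ∧ (∀ v, G.IsSink v → v ∈ t.blue) ∧
    ∀ u v, G.E u v → (u, v) ∈ t.marked

def PRBPCost {V : Type} (L : List (PRBPMove V)) : ℕ := (L.map PRBPMove.ioCost).sum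

noncomputable def optPRBP (G : DirGraph V) (r : ℕ) : ℕ∞ :=
  sInf ((fun L => (PRBPCost L : ℕ∞)) '' {L | PRBPValid G r L})

/-- `s` is a state reached by some prefix of the pebbling `L`. -/
def PRBPPrefixState (G : DirGraph V) (r : ℕ) (L : List (PRBPMove V))
    (s : PRBPState V) : Prop :=
  ∃ L₁ L₂, L = L₁ ++ L₂ ∧ PRBPReaches G r (PRBPInit G) L₁ s

/-! ### Paths, dominators, S-partitions -/

/-- A directed path in `G` starting at a source node. -/
def IsSourcePath (G : DirGraph V) (p : List V) : Prop :=
  p ≠ [] ∧ p.Chain' G.E ∧ ∀ h : p ≠ [], G.IsSource (p.head h)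

/-- `D` is a dominator for the node set `V₀`. -/
def Dominates (G : DirGraph V) (D : Set V) (V₀ : Set V) : Prop :=
  ∀ p : List V, IsSourcePath G p → ∀ h : p ≠ [], p.getLast h ∈ V₀ →
    ∃ d ∈ D, d ∈ p

/-- The path `p` contains an edge of `E₀` (two consecutive nodes forming it). -/
def PathContainsEdge (p : List V) (E₀ : Set (V × V)) : Prop :=
  ∃ u v, (u, v) ∈ E₀ ∧ [u, v] <:+: p

/-- `D` is an edge-dominator for the edge set `E₀`. -/
def EdgeDominates (G : DirGraph V) (D : Set V) (E₀ : Set (V × V)) : Prop :=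
  ∀ p : List V, IsSourcePath G p → PathContainsEdge p E₀ → ∃ d ∈ D, d ∈ p

/-- The terminal set of a node set `V₀`: nodes of `V₀` with no out-neighbor in `V₀`. -/
def terminalSet (G : DirGraph V) (V₀ : Set V) : Set V :=
  {v | v ∈ V₀ ∧ ∀ w, G.E v w → w ∉ V₀}

/-- The edge-terminal set of an edge set `E₀`. -/
def edgeTerminalSet (E₀ : Set (V × V)) : Set V :=
  {v | (∃ u, (u, v) ∈ E₀) ∧ ∀ w, (v, w) ∉ E₀}

/-- An `S`-partition of the DAG `G` (Hong–Kung). -/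
def IsSPartition (G : DirGraph V) (S : ℕ) (k : ℕ) (P : Fin k → Set V) : Prop :=
  (∀ v : V, ∃! i, v ∈ P i) ∧
  (∀ i j : Fin k, j < i → ∀ u v, u ∈ P i → v ∈ P j → ¬ G.E u v) ∧
  (∀ i, ∃ D : Set V, D.ncard ≤ S ∧ Dominates G D (P i)) ∧
  (∀ i, (terminalSet G (P i)).ncard ≤ S)

/-- An `S`-dominator partition of the DAG `G`: an `S`-partition without the
terminal-set condition. -/
def IsSDomPartition (G : DirGraph V) (S : ℕ) (k : ℕ) (P : Fin k → Set V) : Prop :=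
  (∀ v : V, ∃! i, v ∈ P i) ∧
  (∀ i j : Fin k, j < i → ∀ u v, u ∈ P i → v ∈ P j → ¬ G.E u v) ∧
  (∀ i, ∃ D : Set V, D.ncard ≤ S ∧ Dominates G D (P i))

/-- An `S`-edge partition of the DAG `G`. -/
def IsSEdgePartition (G : DirGraph V) (S : ℕ) (k : ℕ)
    (P : Fin k → Set (V × V)) : Prop :=
  (∀ i, P i ⊆ {e | G.E e.1 e.2}) ∧
  (∀ u v, G.E u v → ∃! i, (u, v) ∈ P i) ∧
  (∀ i j : Fin k, i < j → ∀ u v w, G.E u v → G.E v w →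
      ¬ ((v, w) ∈ P i ∧ (u, v) ∈ P j)) ∧
  (∀ i, ∃ D : Set V, D.ncard ≤ S ∧ EdgeDominates G D (P i)) ∧
  (∀ i, (edgeTerminalSet (P i)).ncard ≤ S)

noncomputable def minEdgePartition (G : DirGraph V) (S : ℕ) : ℕ :=
  sInf {k | ∃ P : Fin k → Set (V × V), IsSEdgePartition G S k P}

noncomputable def minDomPartition (G : DirGraph V) (S : ℕ) : ℕ :=
  sInf {k | ∃ P : Fin k → Set V, IsSDomPartition G S k P}

noncomputable def minSPartition (G : DirGraph V) (S : ℕ) : ℕ :=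
  sInf {k | ∃ P : Fin k → Set V, IsSPartition G S k P}
/-- The zipper DAG: two groups `A`, `B` of `d` source nodes and a chain
`c_0, …, c_{ℓ-1}` where `c_i` has in-edges from `c_{i-1}` and from all of `A`
if `i` is even, and from all of `B` if `i` is odd (so the 1-indexed `c_1` gets
all of `A`, and groups alternate along the chain). -/
def ZipG (d ℓ : ℕ) : DirGraph (Fin d ⊕ (Fin d ⊕ Fin ℓ)) :=
  ⟨fun a b =>
    match a, b with
    | .inl _, .inr (.inr i) => (i : ℕ) % 2 = 0
    | .inr (.inl _), .inr (.inr i) => (i : ℕ) % 2 = 1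
    | .inr (.inr i), .inr (.inr i') => (i : ℕ) + 1 = (i' : ℕ)
    | _, _ => False⟩

/-!
Lower bound. In the one-shot game the chain is computed in order. Let `c_k` be the next node, `n`
the cost so far, and `g` the number of red sources in the group feeding `c_k`. Between computations
only a load can raise `g`, and by at most one. Computing `c_k` requires its whole group, `c_{k-1}`
and `c_k` itself to be red, which leaves at most `r - d - 2` red pebbles on the group feeding
`c_{k+1}`. Hence `(2d + 2 - r)(k - 1) + g ≤ n` is an invariant, and `2d + 2 - r = d` for
`r = d + 2`.

Upper bound. With `A` loaded, aggregate and save the `A`-inputs of every `A`-fed chain node, except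
that `c_0` is taken last and kept red instead of being saved. Then replace `A` by `B` and walk along
the chain: a `B`-fed node is computed for free, an `A`-fed node is loaded and completed. Only every
second chain node costs anything, namely one save and one load, so the total is about `ℓ + 2d`.
-/

theorem RBPReaches.induct_cost {W : Type} [DecidableEq W] {G : DirGraph W} {r : ℕ}
    {I : RBPState W → ℕ → Prop}
    (step : ∀ {s m t n}, I s n → RBPStep G r s m t → I t (n + m.ioCost))
    {s t : RBPState W} {L : List (RBPMove W)} (h : RBPReaches G r s L t) :
    ∀ {n}, I s n → I t (n + RBPCost L) := by
  induction h with
  | nil s => exact fun hs => by simpa [RBPCost] using hs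
  | cons hstep _ ih => exact fun hs => by simpa [RBPCost, add_assoc] using ih (step hs hstep)

theorem le_optRBP_of_invariant {G : DirGraph V} {r N : ℕ} (I : RBPState V → ℕ → Prop)
    (init : I (RBPInit G) 0)
    (step : ∀ {s m t n}, I s n → RBPStep G r s m t → I t (n + m.ioCost))
    (final : ∀ {t n}, I t n → (∀ v, G.IsSink v → v ∈ t.blue) → N ≤ n) :
    (N : ℕ∞) ≤ optRBP G r := by
  refine le_sInf ?_
  rintro _ ⟨L, ⟨t, hL, hsink⟩, rfl⟩
  have hN : N ≤ 0 + RBPCost L := final (hL.induct_cost step init) hsink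
  exact Nat.cast_le.2 (hN.trans_eq (zero_add _))

theorem optPRBP_le {G : DirGraph V} {r : ℕ} {L : List (PRBPMove V)} (h : PRBPValid G r L) :
    optPRBP G r ≤ PRBPCost L :=
  sInf_le ⟨L, h, rfl⟩

section PRBPStrategies

variable {W : Type} [DecidableEq W] {G : DirGraph W} {r : ℕ} {s t u : PRBPState W} {m n : ℕ}

theorem PRBPReaches.append {L L' : List (PRBPMove W)} (h : PRBPReaches G r s L t)
    (h' : PRBPReaches G r t L' u) : PRBPReaches G r s (L ++ L') u := by
  induction h with
  | nil s => exact h'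
  | cons hstep _ ih => exact .cons hstep (ih h')

/-- The PRBP state `t` can be reached from `s` by moves of total I/O cost at most `n`. Keeping only
an upper bound on the cost makes strategies compose without recording their moves. -/
def PRBPReachesWithin (G : DirGraph W) (r : ℕ) (s : PRBPState W) (n : ℕ) (t : PRBPState W) : Prop :=
  ∃ L, PRBPReaches G r s L t ∧ PRBPCost L ≤ n

namespace PRBPReachesWithin

theorem refl (s : PRBPState W) : PRBPReachesWithin G r s 0 s :=
  ⟨[], .nil s, le_rfl⟩

theorem of_step (move : PRBPMove W) (h : PRBPStep G r s move t) :
    PRBPReachesWithin G r s move.ioCost t :=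
  ⟨[move], .cons h (.nil t), by simp [PRBPCost]⟩

theorem trans (h : PRBPReachesWithin G r s n t) (h' : PRBPReachesWithin G r t m u) :
    PRBPReachesWithin G r s (n + m) u := by
  obtain ⟨L, hL, hn⟩ := h
  obtain ⟨L', hL', hm⟩ := h'
  refine ⟨L ++ L', hL.append hL', ?_⟩
  simpa only [PRBPCost, List.map_append, List.sum_append] using add_le_add hn hm

theorem mono (h : PRBPReachesWithin G r s n t) (hnm : n ≤ m) : PRBPReachesWithin G r s m t :=
  let ⟨L, hL, hn⟩ := h
  ⟨L, hL, hn.trans hnm⟩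

theorem load_finset {S : Finset W} (hblue : S ⊆ s.blue) (hcard : (S ∪ s.red).card ≤ r) :
    PRBPReachesWithin G r s S.card { s with lred := S ∪ s.lred } := by
  induction S using Finset.induction_on with
  | empty => simpa using refl s
  | insert v S hvS ih =>
    rw [Finset.card_insert_of_notMem hvS]
    have hload : PRBPReachesWithin G r s S.card { s with lred := S ∪ s.lred } :=
      ih ((Finset.subset_insert v S).trans hblue)
        ((Finset.card_le_card (by grind)).trans hcard)
    refine hload.trans (of_step (.load v) ⟨hblue (Finset.mem_insert_self v S), ?_, ?_⟩)
    · simpa only [PRBPState.red, Finset.insert_union, Finset.union_assoc] using hcard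
    · simp only [Finset.insert_union]

theorem delete_finset {S : Finset W} (hS : S ⊆ s.lred) :
    PRBPReachesWithin G r s 0 { s with lred := s.lred \ S } := by
  induction S using Finset.induction_on with
  | empty => simpa only [Finset.sdiff_empty] using refl s
  | insert v S hvS ih =>
    obtain ⟨hv, hS⟩ := Finset.insert_subset_iff.1 hS
    refine (ih hS).trans (of_step (.delete v) (.inl ⟨Finset.mem_sdiff.2 ⟨hv, hvS⟩, ?_⟩))
    simp only [Finset.sdiff_insert]

end PRBPReachesWithin

/-- The state after marking all edges from `S` to `v`; as the value of `v` has changed, `v` is left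
dark red and without a blue pebble. -/
def PRBPState.aggregate (s : PRBPState W) (S : Finset W) (v : W) : PRBPState W where
  lred := s.lred.erase v
  dred := insert v s.dred
  blue := s.blue.erase v
  marked := S ×ˢ {v} ∪ s.marked

namespace PRBPState

theorem red_aggregate (s : PRBPState W) (S : Finset W) (v : W) :
    (s.aggregate S v).red = insert v s.red := by
  ext w
  simp only [aggregate, red]
  grind

theorem aggregate_aggregate (s : PRBPState W) (S T : Finset W) (v : W) :
    (s.aggregate S v).aggregate T v = s.aggregate (T ∪ S) v := by
  simp only [aggregate, Finset.erase_idem, Finset.insert_idem, Finset.union_product,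
    Finset.union_assoc]

end PRBPState

namespace PRBPReachesWithin

theorem aggregate_singleton {u v : W} (hedge : G.E u v) (hunmarked : (u, v) ∉ s.marked)
    (hcomplete : ∀ w, G.E w u → (w, u) ∈ s.marked) (hu : u ∈ s.red)
    (hv : v ∈ s.red ∨ v ∉ s.blue) (hcard : (insert v s.red).card ≤ r) :
    PRBPReachesWithin G r s 0 (s.aggregate {u} v) := by
  refine of_step (.pcompute u v) ⟨hedge, hunmarked, hcomplete, hu, by tauto, ?_, ?_⟩
  · rwa [← s.red_aggregate {u} v] at hcard
  · rw [PRBPState.aggregate, Finset.singleton_product_singleton, ← Finset.insert_eq]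

theorem aggregate {S : Finset W} {v : W} (hne : S.Nonempty)
    (hedge : ∀ u ∈ S, G.E u v) (hunmarked : ∀ u ∈ S, (u, v) ∉ s.marked)
    (hcomplete : ∀ u ∈ S, ∀ w, G.E w u → (w, u) ∈ s.marked) (hred : S ⊆ s.red)
    (hv : v ∈ s.red ∨ v ∉ s.blue) (hcard : (insert v s.red).card ≤ r) :
    PRBPReachesWithin G r s 0 (s.aggregate S v) := by
  induction hne using Finset.Nonempty.cons_induction with
  | singleton u =>
    simp only [Finset.mem_singleton, forall_eq, Finset.singleton_subset_iff]
      at hedge hunmarked hcomplete hred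
    exact aggregate_singleton hedge hunmarked hcomplete hred hv hcard
  | cons u S huS _ ih =>
    simp only [Finset.cons_eq_insert, Finset.forall_mem_insert, Finset.insert_subset_iff]
      at hedge hunmarked hcomplete hred ⊢
    have hS : PRBPReachesWithin G r s 0 (s.aggregate S v) :=
      ih hedge.2 hunmarked.2 hcomplete.2 hred.2
    have hu : PRBPReachesWithin G r (s.aggregate S v) 0 ((s.aggregate S v).aggregate {u} v) := by
      refine aggregate_singleton hedge.1 ?_ ?_ ?_ (.inl ?_) ?_
      · simp [PRBPState.aggregate, huS, hunmarked.1]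
      · exact fun w hw => Finset.mem_union_right _ (hcomplete.1 w hw)
      · simp [PRBPState.red_aggregate, hred.1]
      · simp [PRBPState.red_aggregate]
      · simpa [PRBPState.red_aggregate] using hcard
    rw [s.aggregate_aggregate, ← Finset.insert_eq] at hu
    exact hS.trans hu

theorem save_partial {S : Finset W} {v : W} (hne : S.Nonempty)
    (hedge : ∀ u ∈ S, G.E u v) (hunmarked : ∀ u ∈ S, (u, v) ∉ s.marked)
    (hcomplete : ∀ u ∈ S, ∀ w, G.E w u → (w, u) ∈ s.marked) (hred : S ⊆ s.red)
    (hvred : v ∉ s.red) (hvblue : v ∉ s.blue) (hcard : s.red.card + 1 ≤ r) :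
    PRBPReachesWithin G r s 1
      { s with blue := insert v s.blue, marked := S ×ˢ {v} ∪ s.marked } := by
  obtain ⟨hvl, hvd⟩ : v ∉ s.lred ∧ v ∉ s.dred := by
    simpa only [PRBPState.red, Finset.mem_union, not_or] using hvred
  have hagg : PRBPReachesWithin G r s 0 (s.aggregate S v) :=
    aggregate hne hedge hunmarked hcomplete hred (.inr hvblue)
      (by rwa [Finset.card_insert_of_notMem hvred])
  have hsave := of_step (G := G) (r := r) (s := s.aggregate S v) (.save v)
    ⟨Finset.mem_insert_self _ _, rfl⟩
  refine (hagg.trans hsave).trans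
    (of_step (.delete v) (.inl ⟨Finset.mem_insert_self _ _, ?_⟩))
  simp [PRBPState.aggregate, hvl, hvd, hvblue]

theorem save_partials {S T : Finset W} (hne : S.Nonempty)
    (hedge : ∀ u ∈ S, ∀ v ∈ T, G.E u v) (hunmarked : ∀ u ∈ S, ∀ v ∈ T, (u, v) ∉ s.marked)
    (hcomplete : ∀ u ∈ S, ∀ w, G.E w u → (w, u) ∈ s.marked) (hred : S ⊆ s.red)
    (hTred : Disjoint T s.red) (hTblue : Disjoint T s.blue) (hcard : s.red.card + 1 ≤ r) :
    PRBPReachesWithin G r s T.card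
      { s with blue := T ∪ s.blue, marked := S ×ˢ T ∪ s.marked } := by
  induction T using Finset.induction_on with
  | empty => simpa using refl s
  | insert v T hvT ih =>
    simp only [Finset.forall_mem_insert, Finset.disjoint_insert_left] at *
    rw [Finset.card_insert_of_notMem hvT]
    have hT := ih (fun u hu => (hedge u hu).2) (fun u hu => (hunmarked u hu).2) hTred.2 hTblue.2
    have hv := save_partial (G := G) (r := r)
      (s := { s with blue := T ∪ s.blue, marked := S ×ˢ T ∪ s.marked }) (v := v)
      hne (fun u hu => (hedge u hu).1) (by simpa [hvT] using fun u hu => (hunmarked u hu).1)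
      (fun u hu w hw => Finset.mem_union_right _ (hcomplete u hu w hw)) hred hTred.1
      (by simp [hvT, hTblue.1]) hcard
    simpa only [Finset.insert_eq, Finset.product_union, Finset.union_assoc] using hT.trans hv

end PRBPReachesWithin

end PRBPStrategies

namespace ZipG

variable {d ℓ : ℕ}

/-- The vertices of `ZipG d ℓ`: group `A`, group `B`, and the chain. -/
abbrev Vertex (d ℓ : ℕ) : Type := Fin d ⊕ (Fin d ⊕ Fin ℓ)

/-- The chain node `c_i`, counted from `0`. -/
abbrev chain (i : Fin ℓ) : Vertex d ℓ := .inr (.inr i)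

/-- The group of sources feeding the chain nodes whose index has the parity of `k`, so that
`A` is `group d ℓ 0` and `B` is `group d ℓ 1`. -/
def group (d ℓ k : ℕ) : Finset (Vertex d ℓ) :=
  if k % 2 = 0 then Finset.univ.image .inl else Finset.univ.image (.inr ∘ .inl)

@[simp]
theorem inl_mem_group {k : ℕ} {a : Fin d} : .inl a ∈ group d ℓ k ↔ k % 2 = 0 := by
  by_cases hk : k % 2 = 0 <;> simp [group, hk]

@[simp]
theorem inr_inl_mem_group {k : ℕ} {b : Fin d} : .inr (.inl b) ∈ group d ℓ k ↔ k % 2 = 1 := by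
  rcases Nat.mod_two_eq_zero_or_one k with hk | hk <;> simp [group, hk]

@[simp]
theorem chain_notMem_group {k : ℕ} {i : Fin ℓ} : chain i ∉ group d ℓ k := by
  by_cases hk : k % 2 = 0 <;> simp [group, hk]

theorem card_group (d ℓ k : ℕ) : (group d ℓ k).card = d := by
  unfold group
  split_ifs
  · rw [Finset.card_image_of_injective _ Sum.inl_injective, Finset.card_fin]
  · rw [Finset.card_image_of_injective _ (Sum.inr_injective.comp Sum.inl_injective),
      Finset.card_fin]

theorem group_nonempty (hd : 0 < d) (k : ℕ) : (group d ℓ k).Nonempty :=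
  Finset.card_pos.1 (by rwa [card_group])

theorem group_congr {j k : ℕ} (h : j % 2 = k % 2) : group d ℓ j = group d ℓ k := by
  simp only [group, h]

theorem disjoint_group_succ (d ℓ k : ℕ) : Disjoint (group d ℓ k) (group d ℓ (k + 1)) := by
  rw [Finset.disjoint_left]
  rintro (a | b | i)
  · simp only [inl_mem_group]
    omega
  · simp only [inr_inl_mem_group]
    omega
  · simp only [chain_notMem_group, not_false_eq_true, implies_true]

theorem edge_chain_iff {u : Vertex d ℓ} {i : Fin ℓ} :
    (ZipG d ℓ).E u (chain i) ↔ u ∈ group d ℓ i ∨ ∃ j : Fin ℓ, (j : ℕ) + 1 = i ∧ u = chain j := by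
  rcases u with a | b | j <;> simp [ZipG, chain, eq_comm]

theorem edge_iff {u v : Vertex d ℓ} :
    (ZipG d ℓ).E u v ↔ ∃ i : Fin ℓ, v = chain i ∧
      (u ∈ group d ℓ i ∨ ∃ j : Fin ℓ, (j : ℕ) + 1 = i ∧ u = chain j) := by
  constructor
  · intro h
    rcases v with a | b | i
    · rcases u with _ | _ | _ <;> exact h.elim
    · rcases u with _ | _ | _ <;> exact h.elim
    · exact ⟨i, rfl, edge_chain_iff.1 h⟩
  · rintro ⟨i, rfl, h⟩
    exact edge_chain_iff.2 h

theorem isSource_of_mem_group {k : ℕ} {v : Vertex d ℓ} (hv : v ∈ group d ℓ k) :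
    (ZipG d ℓ).IsSource v := by
  intro u h
  obtain ⟨i, rfl, -⟩ := edge_iff.1 h
  exact chain_notMem_group hv

theorem not_isSource_chain (hd : 0 < d) (i : Fin ℓ) : ¬ (ZipG d ℓ).IsSource (chain i) := by
  obtain ⟨u, hu⟩ := group_nonempty (ℓ := ℓ) hd i
  exact fun h => h u (edge_chain_iff.2 (.inl hu))

theorem isSource_iff (hd : 0 < d) {v : Vertex d ℓ} :
    (ZipG d ℓ).IsSource v ↔ v ∈ group d ℓ 0 ∪ group d ℓ 1 := by
  rcases v with a | b | i
  · simp [isSource_of_mem_group (k := 0) (inl_mem_group.2 rfl)]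
  · simp [isSource_of_mem_group (k := 1) (inr_inl_mem_group.2 rfl)]
  · simpa using not_isSource_chain hd i

theorem isSink_chain_iff {i : Fin ℓ} :
    (ZipG d ℓ).IsSink (chain (d := d) i) ↔ (i : ℕ) + 1 = ℓ := by
  constructor
  · intro h
    by_contra hi
    exact h (chain ⟨i + 1, by omega⟩) (edge_chain_iff.2 (.inr ⟨i, rfl, rfl⟩))
  · rintro hi u h
    obtain ⟨j, -, hj | ⟨i', hi', hii'⟩⟩ := edge_iff.1 h
    · exact chain_notMem_group hj
    · simp only [Sum.inr.injEq] at hii'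
      omega

section LowerBound

variable {r : ℕ}

/-- The invariant of a one-shot pebbling of the zipper in which `c_k` is the next chain node to be
computed and `n` is the cost so far. For `k ≤ 1`, when no switch between groups has been paid for,
the truncated `k - 1` is `0`. -/
structure RBPInvariant (d ℓ r : ℕ) (s : RBPState (Vertex d ℓ)) (k n : ℕ) : Prop where
  computed_of_lt : ∀ i : Fin ℓ, (i : ℕ) < k → chain i ∈ s.computed
  lt_of_red : ∀ i : Fin ℓ, chain i ∈ s.red → (i : ℕ) < k
  lt_of_blue : ∀ i : Fin ℓ, chain i ∈ s.blue → (i : ℕ) < k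
  cost : (2 * d + 2 - r) * (k - 1) + (s.red ∩ group d ℓ k).card ≤ n

theorem card_inter_group_succ_le (hr : r ≤ 2 * d + 1) {i : Fin ℓ} {R : Finset (Vertex d ℓ)}
    (hin : ∀ u, (ZipG d ℓ).E u (chain i) → u ∈ R) (hcard : R.card + 1 ≤ r) :
    (2 * d + 2 - r) * i + (R ∩ group d ℓ (i + 1)).card ≤ (2 * d + 2 - r) * (i - 1) + d := by
  have hsub : group d ℓ i ∪ R ∩ group d ℓ (i + 1) ⊆ R :=
    Finset.union_subset (fun u hu => hin u (edge_chain_iff.2 (.inl hu))) Finset.inter_subset_left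
  have hcard_union :
      (group d ℓ i ∪ R ∩ group d ℓ (i + 1)).card = d + (R ∩ group d ℓ (i + 1)).card := by
    rw [Finset.card_union_of_disjoint
      ((disjoint_group_succ d ℓ i).mono_right Finset.inter_subset_right), card_group]
  obtain ⟨_ | j, hi⟩ := i
  · have hle := Finset.card_le_card hsub
    simp only [hcard_union, mul_zero, zero_tsub, zero_add] at hle ⊢
    omega
  · have hpred : chain ⟨j, by omega⟩ ∈ R := hin _ (edge_chain_iff.2 (.inr ⟨_, rfl, rfl⟩))
    have hle := Finset.card_le_card (Finset.insert_subset hpred hsub)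
    rw [Finset.card_insert_of_notMem (by simp), hcard_union] at hle
    simp only [add_tsub_cancel_right, mul_add_one] at hle ⊢
    omega

theorem RBPInvariant.init (hd : 0 < d) : RBPInvariant d ℓ r (RBPInit (ZipG d ℓ)) 0 0 where
  computed_of_lt := by simp
  lt_of_red := by simp [RBPInit]
  lt_of_blue i hi := (not_isSource_chain hd i (Finset.mem_filter.1 hi).2).elim
  cost := by simp [RBPInit]

namespace RBPInvariant

variable {s : RBPState (Vertex d ℓ)} {k n : ℕ}

theorem save (h : RBPInvariant d ℓ r s k n) {v : Vertex d ℓ} (hv : v ∈ s.red) :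
    RBPInvariant d ℓ r { s with blue := insert v s.blue } k (n + 1) where
  computed_of_lt := h.computed_of_lt
  lt_of_red := h.lt_of_red
  lt_of_blue i hi := by
    obtain rfl | hi := Finset.mem_insert.1 hi
    exacts [h.lt_of_red i hv, h.lt_of_blue i hi]
  cost := h.cost.trans (Nat.le_succ n)

theorem load (h : RBPInvariant d ℓ r s k n) {v : Vertex d ℓ} (hv : v ∈ s.blue) :
    RBPInvariant d ℓ r { s with red := insert v s.red } k (n + 1) where
  computed_of_lt := h.computed_of_lt
  lt_of_red i hi := by
    obtain rfl | hi := Finset.mem_insert.1 hi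
    exacts [h.lt_of_blue i hv, h.lt_of_red i hi]
  lt_of_blue := h.lt_of_blue
  cost := by
    have hsub : insert v s.red ∩ group d ℓ k ⊆ insert v (s.red ∩ group d ℓ k) := by grind
    have hcard := (Finset.card_le_card hsub).trans (Finset.card_insert_le _ _)
    exact (Nat.add_le_add_left hcard _).trans (Nat.succ_le_succ h.cost)

theorem delete (h : RBPInvariant d ℓ r s k n) (v : Vertex d ℓ) :
    RBPInvariant d ℓ r { s with red := s.red.erase v } k n where
  computed_of_lt := h.computed_of_lt
  lt_of_red i hi := h.lt_of_red i (Finset.mem_of_mem_erase hi)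
  lt_of_blue := h.lt_of_blue
  cost := by
    have hcard : (s.red.erase v ∩ group d ℓ k).card ≤ (s.red ∩ group d ℓ k).card :=
      Finset.card_le_card (Finset.inter_subset_inter_right (Finset.erase_subset v s.red))
    exact (Nat.add_le_add_left hcard _).trans h.cost

theorem eq_of_computable (h : RBPInvariant d ℓ r s k n) {i : Fin ℓ}
    (hnew : chain i ∉ s.computed) (hin : ∀ u, (ZipG d ℓ).E u (chain i) → u ∈ s.red) :
    (i : ℕ) = k := by
  have hle : k ≤ i := not_lt.1 fun hlt => hnew (h.computed_of_lt i hlt)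
  obtain ⟨_ | j, hi⟩ := i
  · exact (Nat.le_zero.1 hle).symm
  · exact le_antisymm
      (h.lt_of_red ⟨j, by omega⟩ (hin _ (edge_chain_iff.2 (.inr ⟨_, rfl, rfl⟩)))) hle

theorem compute (hr : r ≤ 2 * d + 1) {i : Fin ℓ} (h : RBPInvariant d ℓ r s i n)
    (hin : ∀ u, (ZipG d ℓ).E u (chain i) → u ∈ s.red) (hcard : (insert (chain i) s.red).card ≤ r) :
    RBPInvariant d ℓ r
      { s with red := insert (chain i) s.red, computed := insert (chain i) s.computed }
      (i + 1) n where
  computed_of_lt j hj := by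
    obtain hlt | heq := Nat.lt_succ_iff_lt_or_eq.1 hj
    · exact Finset.mem_insert_of_mem (h.computed_of_lt j hlt)
    · rw [Fin.ext heq]
      exact Finset.mem_insert_self _ _
  lt_of_red j hj := by
    obtain heq | hj := Finset.mem_insert.1 hj
    · simp only [Sum.inr.injEq] at heq
      omega
    · exact (h.lt_of_red j hj).trans (Nat.lt_succ_self i)
  lt_of_blue j hj := (h.lt_of_blue j hj).trans (Nat.lt_succ_self i)
  cost := by
    have hgroup : s.red ∩ group d ℓ i = group d ℓ i :=
      Finset.inter_eq_right.2 fun u hu => hin u (edge_chain_iff.2 (.inl hu))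
    have hi : chain i ∉ s.red := fun hi => (h.lt_of_red i hi).false
    rw [Finset.card_insert_of_notMem hi] at hcard
    rw [Finset.insert_inter_of_notMem chain_notMem_group]
    calc (2 * d + 2 - r) * i + (s.red ∩ group d ℓ (i + 1)).card
        ≤ (2 * d + 2 - r) * (i - 1) + d := card_inter_group_succ_le hr hin hcard
      _ = (2 * d + 2 - r) * (i - 1) + (s.red ∩ group d ℓ i).card := by rw [hgroup, card_group]
      _ ≤ n := h.cost

theorem exists_step (hr : r ≤ 2 * d + 1) (h : ∃ k, RBPInvariant d ℓ r s k n)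
    {move : RBPMove (Vertex d ℓ)} {t : RBPState (Vertex d ℓ)}
    (hstep : RBPStep (ZipG d ℓ) r s move t) :
    ∃ k, RBPInvariant d ℓ r t k (n + move.ioCost) := by
  obtain ⟨k, h⟩ := h
  match move, hstep with
  | .save v, ⟨hv, ht⟩ => exact ht ▸ ⟨k, h.save hv⟩
  | .load v, ⟨hv, _, ht⟩ => exact ht ▸ ⟨k, h.load hv⟩
  | .delete v, ⟨_, ht⟩ => exact ht ▸ ⟨k, h.delete v⟩
  | .compute v, ⟨hsource, hnew, hin, hcard, ht⟩ =>
    obtain ⟨u, hu⟩ := not_forall_not.1 hsource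
    obtain ⟨i, rfl, -⟩ := edge_iff.1 hu
    obtain rfl := h.eq_of_computable hnew hin
    exact ht ▸ ⟨i + 1, h.compute hr hin hcard⟩

end RBPInvariant

theorem le_optRBP (hd : 0 < d) (ℓ r : ℕ) :
    (((2 * d + 2 - r) * (ℓ - 1) : ℕ) : ℕ∞) ≤ optRBP (ZipG d ℓ) r := by
  obtain hr | hr := Nat.lt_or_ge (2 * d + 1) r
  · simp [Nat.sub_eq_zero_of_le (show 2 * d + 2 ≤ r from hr)]
  refine le_optRBP_of_invariant (fun s n => ∃ k, RBPInvariant d ℓ r s k n) ⟨0, .init hd⟩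
    (fun h => RBPInvariant.exists_step hr h) ?_
  rintro t n ⟨k, h⟩ hsink
  have hℓk : ℓ - 1 ≤ k - 1 := by
    obtain rfl | hℓ := Nat.eq_zero_or_pos ℓ
    · exact Nat.zero_le _
    · have hlast := h.lt_of_blue ⟨ℓ - 1, by omega⟩
        (hsink _ (isSink_chain_iff.2 (Nat.sub_add_cancel hℓ)))
      simp only at hlast
      omega
  exact (Nat.mul_le_mul_left _ hℓk).trans ((Nat.le_add_right _ _).trans h.cost)

theorem le_optRBP_add_two (hd : 0 < d) (ℓ : ℕ) :
    ((d * (ℓ - 1) : ℕ) : ℕ∞) ≤ optRBP (ZipG d ℓ) (d + 2) := by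
  have hcoeff : 2 * d + 2 - (d + 2) = d := by omega
  simpa only [hcoeff] using le_optRBP hd ℓ (d + 2)

end LowerBound

section UpperBound

variable {r : ℕ}

/-- The `A`-fed chain nodes beyond `c_k`: those whose saved partial aggregates are still waiting on
blue pebbles when the strategy stands at `c_k`. -/
def pending (d ℓ k : ℕ) : Finset (Vertex d ℓ) :=
  (Finset.univ.filter fun i : Fin ℓ => (i : ℕ) % 2 = 0 ∧ k < i).image chain

@[simp]
theorem chain_mem_pending {k : ℕ} {i : Fin ℓ} :
    chain i ∈ pending d ℓ k ↔ (i : ℕ) % 2 = 0 ∧ k < i := by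
  simp [pending]

theorem disjoint_pending_group (d ℓ j k : ℕ) : Disjoint (pending d ℓ j) (group d ℓ k) := by
  simp [Finset.disjoint_left, pending]

theorem edge_of_mem_pending {k : ℕ} {u v : Vertex d ℓ} (hu : u ∈ group d ℓ 0)
    (hv : v ∈ pending d ℓ k) : (ZipG d ℓ).E u v := by
  obtain ⟨i, hi, rfl⟩ := Finset.mem_image.1 hv
  have hpar : (i : ℕ) % 2 = 0 := (Finset.mem_filter.1 hi).2.1
  exact edge_chain_iff.2 (.inl (group_congr (j := 0) hpar.symm ▸ hu))

theorem card_pending_zero_le (d ℓ : ℕ) : (pending d ℓ 0).card ≤ (ℓ - 1) / 2 := by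
  refine Finset.card_image_le.trans ?_
  rw [← Finset.card_range ((ℓ - 1) / 2)]
  refine Finset.card_le_card_of_injOn (fun i => (i : ℕ) / 2 - 1) ?_ ?_
  · intro i hi
    simp only [Finset.coe_filter, Finset.mem_univ, true_and, Set.mem_ofPred_eq, Finset.coe_range,
      Set.mem_Iio] at hi ⊢
    omega
  · intro i hi j hj hij
    simp only [Finset.coe_filter, Finset.mem_univ, true_and, Set.mem_ofPred_eq] at hi hj hij
    omega

/-- The state of the strategy's second phase in which `c_0, …, c_k` are fully computed: `B` is
loaded, `c_k` is dark red, and the `A`-inputs of all later chain nodes are already aggregated. -/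
noncomputable def walkState (d : ℕ) (k : Fin ℓ) : PRBPState (Vertex d ℓ) where
  lred := group d ℓ 1
  dred := {chain k}
  blue := pending d ℓ k ∪ (group d ℓ 0 ∪ group d ℓ 1)
  marked := Finset.univ.filter fun e =>
    (ZipG d ℓ).E e.1 e.2 ∧ (e.1 ∈ group d ℓ 0 ∨ ∃ i ≤ k, e.2 = chain i)

@[simp]
theorem mem_marked_walkState {k i : Fin ℓ} {u : Vertex d ℓ} :
    (u, chain i) ∈ (walkState d k).marked ↔
      (ZipG d ℓ).E u (chain i) ∧ (u ∈ group d ℓ 0 ∨ i ≤ k) := by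
  simp [walkState]

theorem card_insert_insert_group_le (x y : Vertex d ℓ) (k : ℕ) :
    (insert x (insert y (group d ℓ k))).card ≤ d + 2 := by
  calc (insert x (insert y (group d ℓ k))).card
      ≤ (insert y (group d ℓ k)).card + 1 := Finset.card_insert_le _ _
    _ ≤ (group d ℓ k).card + 1 + 1 := Nat.succ_le_succ (Finset.card_insert_le _ _)
    _ = d + 2 := by rw [card_group]

/-- The in-neighbours of `c_k` outside `A`, which are those whose contribution to `c_k` is still
missing after the first phase. -/
noncomputable def lateInputs (d : ℕ) (k : Fin ℓ) : Finset (Vertex d ℓ) :=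
  Finset.univ.filter fun u => (ZipG d ℓ).E u (chain k) ∧ u ∉ group d ℓ 0

@[simp]
theorem mem_lateInputs {k : Fin ℓ} {u : Vertex d ℓ} :
    u ∈ lateInputs d k ↔ (ZipG d ℓ).E u (chain k) ∧ u ∉ group d ℓ 0 := by
  simp [lateInputs]

theorem eq_chain_or_mem_group_of_mem_lateInputs {k k' : Fin ℓ} (hk : (k : ℕ) + 1 = k')
    {u : Vertex d ℓ} (hu : u ∈ lateInputs d k') : u = chain k ∨ u ∈ group d ℓ 1 := by
  obtain ⟨hedge, hA⟩ := mem_lateInputs.1 hu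
  obtain hgroup | ⟨j, hj, rfl⟩ := edge_chain_iff.1 hedge
  · obtain hpar | hpar := Nat.mod_two_eq_zero_or_one k'
    · exact (hA (group_congr (k := 0) hpar ▸ hgroup)).elim
    · exact .inr (group_congr (k := 1) hpar ▸ hgroup)
  · exact .inl (congrArg chain (Fin.ext (by omega)))

theorem marked_walkState_succ {k k' : Fin ℓ} (hk : (k : ℕ) + 1 = k') :
    (walkState d k').marked = lateInputs d k' ×ˢ {chain k'} ∪ (walkState d k).marked := by
  have hle (i : Fin ℓ) : i ≤ k' ↔ i = k' ∨ i ≤ k := by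
    rw [Fin.le_def, Fin.le_def, Fin.ext_iff]
    omega
  ext ⟨u, v⟩
  by_cases hv : ∃ i, v = chain i
  · obtain ⟨i, rfl⟩ := hv
    simp only [mem_marked_walkState, Finset.mem_union, Finset.mem_product, mem_lateInputs,
      Finset.mem_singleton, Sum.inr.injEq, hle]
    grind
  · have hnedge : ¬ (ZipG d ℓ).E u v := fun h => hv ((edge_iff.1 h).imp fun _ => And.left)
    have hvk : v ≠ chain k' := fun h => hv ⟨k', h⟩
    simp only [walkState, Finset.mem_filter, Finset.mem_union, Finset.mem_product,
      Finset.mem_singleton, hnedge, hvk, false_and, and_false, or_self]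

theorem aggregate_walkState {k k' : Fin ℓ} (hk : (k : ℕ) + 1 = k') {R : Finset (Vertex d ℓ)}
    (hR : R.erase (chain k') = group d ℓ 1) :
    ({ walkState d k with lred := R } : PRBPState _).aggregate (lateInputs d k') (chain k') =
      { walkState d k' with dred := {chain k', chain k} } := by
  have hblue : (walkState d k).blue.erase (chain k') = (walkState d k').blue := by
    ext (a | b | i)
    · simp [walkState]
    · simp [walkState]
    · simp only [walkState, Finset.mem_erase, ne_eq, Sum.inr.injEq, Fin.ext_iff, Finset.mem_union,
        chain_mem_pending, chain_notMem_group, or_false]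
      omega
  simp only [PRBPState.aggregate, hR, hblue, ← marked_walkState_succ hk]
  rfl

theorem reachesWithin_aggregate_walkState (hr : d + 2 ≤ r) {k k' : Fin ℓ}
    (hk : (k : ℕ) + 1 = k') {R : Finset (Vertex d ℓ)} (hR : R.erase (chain k') = group d ℓ 1)
    (hk' : chain k' ∈ R ∨ (k' : ℕ) % 2 = 1) :
    PRBPReachesWithin (ZipG d ℓ) r { walkState d k with lred := R } 0
      { walkState d k' with dred := {chain k', chain k} } := by
  have hlt : k < k' := Fin.lt_def.2 (by omega)
  have hedge : (ZipG d ℓ).E (chain k) (chain k') := edge_chain_iff.2 (.inr ⟨k, hk, rfl⟩)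
  rw [← aggregate_walkState hk hR]
  refine .aggregate ⟨chain k, by simp [hedge]⟩ (fun u hu => (mem_lateInputs.1 hu).1) ?_ ?_ ?_ ?_ ?_
  · intro u hu hmarked
    exact (mem_marked_walkState.1 hmarked).2.elim (mem_lateInputs.1 hu).2 hlt.not_ge
  · intro u hu w hw
    obtain rfl | hB := eq_chain_or_mem_group_of_mem_lateInputs hk hu
    · exact mem_marked_walkState.2 ⟨hw, .inr le_rfl⟩
    · exact (isSource_of_mem_group hB w hw).elim
  · intro u hu
    obtain rfl | hB := eq_chain_or_mem_group_of_mem_lateInputs hk hu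
    · exact Finset.mem_union_right _ (Finset.mem_singleton_self _)
    · exact Finset.mem_union_left _ (Finset.mem_of_mem_erase (hR ▸ hB))
  · refine hk'.imp (Finset.mem_union_left _) fun hodd => ?_
    simp [walkState, hodd]
  · refine (Finset.card_le_card ?_).trans
      ((card_insert_insert_group_le (chain k') (chain k) 1).trans hr)
    rw [← hR]
    simp only [walkState, PRBPState.red]
    grind

theorem reachesWithin_compute_succ (hr : d + 2 ≤ r) {k k' : Fin ℓ} (hk : (k : ℕ) + 1 = k') :
    PRBPReachesWithin (ZipG d ℓ) r (walkState d k) (k % 2)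
      { walkState d k' with dred := {chain k', chain k} } := by
  obtain hpar | hpar := Nat.mod_two_eq_zero_or_one k
  · rw [hpar]
    exact reachesWithin_aggregate_walkState hr hk (R := group d ℓ 1) (by simp) (.inr (by omega))
  · have hload : PRBPReachesWithin (ZipG d ℓ) r (walkState d k) 1
        { walkState d k with lred := {chain k'} ∪ group d ℓ 1 } := by
      refine .load_finset (S := {chain k'}) ?_ ?_
      · have hpending : (k' : ℕ) % 2 = 0 ∧ (k : ℕ) < k' := by omega
        simpa [walkState] using hpending
      · refine (Finset.card_le_card ?_).trans
          ((card_insert_insert_group_le (chain k') (chain k) 1).trans hr)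
        simp only [walkState, PRBPState.red]
        grind
    rw [hpar]
    exact hload.trans
      (reachesWithin_aggregate_walkState hr hk (by simp) (.inl (by simp)))

theorem reachesWithin_walkState_succ (hr : d + 2 ≤ r) {k k' : Fin ℓ} (hk : (k : ℕ) + 1 = k') :
    PRBPReachesWithin (ZipG d ℓ) r (walkState d k) (k % 2) (walkState d k') := by
  refine (reachesWithin_compute_succ hr hk).trans
    (.of_step (.delete (chain k)) (.inr ⟨by simp, ?_, ?_⟩))
  · intro w hw
    obtain ⟨i, rfl, hmem | ⟨j, hj, hjk⟩⟩ := edge_iff.1 hw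
    · exact (chain_notMem_group hmem).elim
    · simp only [Sum.inr.injEq] at hjk
      exact mem_marked_walkState.2 ⟨hw, .inr (Fin.le_def.2 (by omega))⟩
  · have hne : chain k ≠ (chain k' : Vertex d ℓ) := by
      simp only [ne_eq, Sum.inr.injEq]
      omega
    simp only [Finset.pair_comm (chain k'), Finset.erase_insert (Finset.notMem_singleton.2 hne)]
    rfl

theorem reachesWithin_walkState (hr : d + 2 ≤ r) {k : ℕ} (hk : k < ℓ) :
    PRBPReachesWithin (ZipG d ℓ) r (walkState d ⟨0, by omega⟩) (k / 2) (walkState d ⟨k, hk⟩) := by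
  induction k with
  | zero => exact .refl _
  | succ k ih =>
    exact ((ih (by omega)).trans (reachesWithin_walkState_succ hr rfl)).mono (by grind)

/-- The state of the first phase in which `A` is loaded and its inputs to all `A`-fed nodes except
`c_0` are aggregated and saved. -/
def savedState (d ℓ : ℕ) : PRBPState (Vertex d ℓ) where
  lred := group d ℓ 0
  dred := ∅
  blue := pending d ℓ 0 ∪ (group d ℓ 0 ∪ group d ℓ 1)
  marked := group d ℓ 0 ×ˢ pending d ℓ 0

theorem red_savedState (d ℓ : ℕ) : (savedState d ℓ).red = group d ℓ 0 :=
  Finset.union_empty _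

/-- The state at the end of the first phase: in addition to `savedState`, `c_0` is computed. -/
def turnState (d : ℕ) (hℓ : 0 < ℓ) : PRBPState (Vertex d ℓ) where
  lred := group d ℓ 0
  dred := {chain ⟨0, hℓ⟩}
  blue := pending d ℓ 0 ∪ (group d ℓ 0 ∪ group d ℓ 1)
  marked := group d ℓ 0 ×ˢ insert (chain ⟨0, hℓ⟩) (pending d ℓ 0)

theorem aggregate_savedState (d : ℕ) (hℓ : 0 < ℓ) :
    (savedState d ℓ).aggregate (group d ℓ 0) (chain ⟨0, hℓ⟩) = turnState d hℓ := by
  have hmarked : group d ℓ 0 ×ˢ insert (chain ⟨0, hℓ⟩) (pending d ℓ 0) =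
      group d ℓ 0 ×ˢ {chain ⟨0, hℓ⟩} ∪ group d ℓ 0 ×ˢ pending d ℓ 0 := by
    rw [Finset.insert_eq, Finset.product_union]
  simp [savedState, turnState, PRBPState.aggregate, hmarked]

theorem marked_turnState (d : ℕ) (hℓ : 0 < ℓ) :
    (turnState d hℓ).marked = (walkState d ⟨0, hℓ⟩).marked := by
  ext ⟨u, v⟩
  constructor
  · intro h
    obtain ⟨hu, hv⟩ := Finset.mem_product.1 h
    have hedge : (ZipG d ℓ).E u v := by
      obtain rfl | hv := Finset.mem_insert.1 hv
      exacts [edge_chain_iff.2 (.inl hu), edge_of_mem_pending hu hv]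
    exact Finset.mem_filter.2 ⟨Finset.mem_univ _, hedge, .inl hu⟩
  · intro h
    obtain ⟨i, rfl, -⟩ := edge_iff.1 (Finset.mem_filter.1 h).2.1
    rw [mem_marked_walkState, edge_chain_iff, Fin.le_def] at h
    simp only [turnState, Finset.mem_product, Finset.mem_insert, Sum.inr.injEq, Fin.ext_iff,
      chain_mem_pending]
    rcases u with a | b | j
    · simp only [inl_mem_group, reduceCtorEq, and_false, exists_false, or_false, true_or, and_true,
        true_and] at h ⊢
      omega
    · simp only [inr_inl_mem_group, Sum.inr.injEq, reduceCtorEq, and_false, exists_false,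
        or_false, false_or] at h
      exact absurd h (by omega)
    · simp only [chain_notMem_group, false_or] at h
      obtain ⟨⟨j', hj', -⟩, hi⟩ := h
      exact absurd hi (by omega)

theorem prbpInit_eq (hd : 0 < d) :
    PRBPInit (ZipG d ℓ) = ⟨∅, ∅, group d ℓ 0 ∪ group d ℓ 1, ∅⟩ := by
  simp only [PRBPInit, isSource_iff hd]
  rw [Finset.filter_univ_mem]

theorem reachesWithin_savedState (hd : 0 < d) (hr : d + 1 ≤ r) :
    PRBPReachesWithin (ZipG d ℓ) r (PRBPInit (ZipG d ℓ)) (d + (ℓ - 1) / 2) (savedState d ℓ) := by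
  have hload : PRBPReachesWithin (ZipG d ℓ) r (PRBPInit (ZipG d ℓ)) d
      ⟨group d ℓ 0, ∅, group d ℓ 0 ∪ group d ℓ 1, ∅⟩ := by
    rw [prbpInit_eq hd]
    convert PRBPReachesWithin.load_finset (S := group d ℓ 0) ?_ ?_ using 1
    · exact (card_group d ℓ 0).symm
    · simp
    · exact Finset.subset_union_left
    · simpa [PRBPState.red, card_group] using (Nat.le_succ d).trans hr
  have hsave : PRBPReachesWithin (ZipG d ℓ) r ⟨group d ℓ 0, ∅, group d ℓ 0 ∪ group d ℓ 1, ∅⟩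
      ((ℓ - 1) / 2) ⟨group d ℓ 0, ∅, pending d ℓ 0 ∪ (group d ℓ 0 ∪ group d ℓ 1),
        group d ℓ 0 ×ˢ pending d ℓ 0 ∪ ∅⟩ := by
    refine (PRBPReachesWithin.save_partials (group_nonempty hd 0)
      (fun u hu v hv => edge_of_mem_pending hu hv) (fun _ _ _ _ => Finset.notMem_empty _)
      (fun u hu w hw => (isSource_of_mem_group hu w hw).elim) Finset.subset_union_left
      ?_ ?_ ?_).mono (card_pending_zero_le d ℓ)
    · simpa only [PRBPState.red, Finset.union_empty] using disjoint_pending_group d ℓ 0 0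
    · exact Finset.disjoint_union_right.2
        ⟨disjoint_pending_group d ℓ 0 0, disjoint_pending_group d ℓ 0 1⟩
    · simpa only [PRBPState.red, Finset.union_empty, card_group] using hr
  rw [Finset.union_empty] at hsave
  exact hload.trans hsave

theorem savedState_reachesWithin_turnState (hd : 0 < d) (hr : d + 1 ≤ r) (hℓ : 0 < ℓ) :
    PRBPReachesWithin (ZipG d ℓ) r (savedState d ℓ) 0 (turnState d hℓ) := by
  rw [← aggregate_savedState]
  refine .aggregate (group_nonempty hd 0) ?_ ?_ ?_ ?_ (.inr ?_) ?_
  · exact fun u hu => edge_chain_iff.2 (.inl hu)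
  · simp [savedState]
  · exact fun u hu w hw => (isSource_of_mem_group hu w hw).elim
  · rw [red_savedState]
  · simp [savedState]
  · rwa [red_savedState, Finset.card_insert_of_notMem chain_notMem_group, card_group]

theorem turnState_reachesWithin_walkState (hr : d + 1 ≤ r) (hℓ : 0 < ℓ) :
    PRBPReachesWithin (ZipG d ℓ) r (turnState d hℓ) d (walkState d ⟨0, hℓ⟩) := by
  have hdelete : PRBPReachesWithin (ZipG d ℓ) r (turnState d hℓ) 0
      { turnState d hℓ with lred := ∅ } := by
    simpa [turnState] using
      PRBPReachesWithin.delete_finset (s := turnState d hℓ) (Finset.Subset.refl _)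
  have hload : PRBPReachesWithin (ZipG d ℓ) r { turnState d hℓ with lred := ∅ }
      (group d ℓ 1).card { turnState d hℓ with lred := group d ℓ 1 ∪ ∅ } := by
    refine .load_finset (fun v hv => by simp [turnState, hv]) ?_
    simpa [turnState, PRBPState.red, card_group] using hr
  have hstate : { turnState d hℓ with lred := group d ℓ 1 ∪ ∅ } = walkState d ⟨0, hℓ⟩ := by
    simp only [marked_turnState, Finset.union_empty]
    rfl
  rw [card_group, hstate] at hload
  simpa only [zero_add] using hdelete.trans hload

theorem exists_prbpValid (hd : 0 < d) (hℓ : 0 < ℓ) (hr : d + 2 ≤ r) :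
    ∃ L, PRBPValid (ZipG d ℓ) r L ∧ PRBPCost L ≤ ℓ + 2 * d := by
  have hlast : ℓ - 1 < ℓ := Nat.sub_one_lt_of_lt hℓ
  have hr' : d + 1 ≤ r := (Nat.le_succ _).trans hr
  have hturn := (reachesWithin_savedState hd hr').trans
    (savedState_reachesWithin_turnState hd hr' hℓ)
  have hwalk := (hturn.trans (turnState_reachesWithin_walkState hr' hℓ)).trans
    (reachesWithin_walkState hr hlast)
  obtain ⟨L, hL, hcost⟩ := hwalk.trans
    (.of_step (.save (chain ⟨ℓ - 1, hlast⟩)) ⟨Finset.mem_singleton_self _, rfl⟩)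
  refine ⟨L, ⟨_, hL, ?_, ?_⟩, ?_⟩
  · rintro (a | b | i) hsink
    · simp [walkState]
    · simp [walkState]
    · have hi : i = ⟨ℓ - 1, hlast⟩ := Fin.ext (Nat.eq_sub_of_add_eq (isSink_chain_iff.1 hsink))
      exact hi ▸ Finset.mem_insert_self _ _
  · intro u v huv
    obtain ⟨i, rfl, -⟩ := edge_iff.1 huv
    exact mem_marked_walkState.2 ⟨huv, .inr (Fin.le_def.2 (Nat.le_sub_one_of_lt i.2))⟩
  · simp only [PRBPMove.ioCost] at hcost
    omega

end UpperBound

theorem optPRBP_lt_optRBP (hd : 2 ≤ d) (hℓ : 7 ≤ ℓ) :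
    optPRBP (ZipG d ℓ) (d + 2) < optRBP (ZipG d ℓ) (d + 2) := by
  have hpos : 0 < d := by omega
  obtain ⟨L, hL, hcost⟩ := exists_prbpValid (ℓ := ℓ) hpos (by omega) le_rfl
  have hgap : ℓ + 2 * d < d * (ℓ - 1) := by
    obtain ⟨e, rfl⟩ := Nat.exists_eq_add_of_le' hℓ
    simp only [Nat.add_succ_sub_one]
    nlinarith
  calc optPRBP (ZipG d ℓ) (d + 2) ≤ PRBPCost L := optPRBP_le hL
    _ < (d * (ℓ - 1) : ℕ) := Nat.cast_lt.2 (hcost.trans_lt hgap)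
    _ ≤ optRBP (ZipG d ℓ) (d + 2) := le_optRBP_add_two hpos ℓ

end ZipG

/-- for `d ≥ 3`, `r = d + 2` and `ℓ` sufficiently large, the
optimal one-shot RBP cost of the zipper DAG is at least `d·(ℓ − O(1)) − O(d)`,
while there is a PRBP strategy of cost at most `2ℓ + O(d)`; in particular
`OPT_PRBP < OPT_RBP`. -/
theorem zipper_gadget :
    ∃ c c₀ : ℕ, 0 < c ∧ ∀ d ℓ : ℕ, 3 ≤ d → c₀ ≤ ℓ →
      (((d * (ℓ - c) - c * d : ℕ) : ℕ∞) ≤ optRBP (ZipG d ℓ) (d + 2)) ∧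
      (∃ L, PRBPValid (ZipG d ℓ) (d + 2) L ∧ PRBPCost L ≤ 2 * ℓ + c * d) ∧
      optPRBP (ZipG d ℓ) (d + 2) < optRBP (ZipG d ℓ) (d + 2) := by
  refine ⟨2, 7, two_pos, fun d ℓ hd hℓ => ⟨?_, ?_, ?_⟩⟩
  · have hle : d * (ℓ - 2) - 2 * d ≤ d * (ℓ - 1) :=
      (Nat.sub_le _ _).trans (Nat.mul_le_mul_left d (by omega))
    exact (Nat.cast_le.2 hle).trans (ZipG.le_optRBP_add_two (by omega) ℓ)
  · obtain ⟨L, hL, hcost⟩ :=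
      ZipG.exists_prbpValid (d := d) (ℓ := ℓ) (by omega) (by omega) le_rfl
    exact ⟨L, hL, hcost.trans (by omega)⟩
  · exact ZipG.optPRBP_lt_optRBP (by omega) hℓ
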